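/- (Equivalence of nonholonomic dynamics in fixed and moving frames.) Let (ℝⁿ, L, F, 𝒜) be a nonholonomic Lagrangian system with smooth Lagrangian L, smooth force field F, and affine constraints defined by smooth functions a_{νi}(q,t), a_ν(q,t) (ν = 1,…,r, i = 1,…,n) with the matrix (a_{νi}) of rank r: 𝒜_t|_q = {ξ ∈ ℝⁿ : Σ_i a_{νi}(q,t)ξ^i + a_ν(q,t) = 0 for all ν}, 𝒟_t|_q = {η ∈ ℝⁿ : Σ_i a_{νi}(q,t)η^i = 0 for all ν}. Let g be a moving reference frame and define l(x,ẋ,t) := L(g_t(x), Dg_t(ẋ) + ω_t(g_t(x)), t), f(x,ẋ,t)(ξ) := F(g_t(x), Dg_t(ẋ) + ω_t(g_t(x)), t)(Dg_t(ξ)), 𝐃_t|_x := (Dg_t)^{-1}(𝒟_t|_{g_t(x)}), 𝐀_t|_x := (Dg_t)^{-1}(𝒜_t|_{g_t(x)}) − Ω_t(x). Then a curve γ is a motion of (ℝⁿ, L, F, 𝒜) — i.e. γ̇(t) ∈ 𝒜_t|_{γ(t)} and δL(η)|_γ + F(η)|_γ = 0 for all η(t) ∈ 𝒟_t|_{γ(t)}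 — if and only if Γ(t) := g_t^{-1}(γ(t)) is a motion of (ℝⁿ, l, f, 𝐀), i.e. Γ̇(t) ∈ 𝐀_t|_{Γ(t)} and δl(ξ)|_Γ + f(ξ)|_Γ = 0 for all ξ(t) ∈ 𝐃_t|_{Γ(t)}. -/

import Mathlib

open scoped ContDiff

/-- Angular velocity in the fixed frame. -/
noncomputable def omegaFixed {n : ℕ} (g ginv : ℝ → (Fin n → ℝ) → (Fin n → ℝ))
    (t : ℝ) (q : Fin n → ℝ) : Fin n → ℝ :=
  deriv (fun s => g (t + s) (ginv t q)) 0

/-- Angular velocity in the moving frame. -/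
noncomputable def omegaMoving {n : ℕ} (g ginv : ℝ → (Fin n → ℝ) → (Fin n → ℝ))
    (t : ℝ) (x : Fin n → ℝ) : Fin n → ℝ :=
  deriv (fun s => ginv t (g (t + s) x)) 0

/-- Membership in the affine constraint space `𝒜_t|_q`:
`Σ_i a_{νi}(q,t) ξ^i + a_ν(q,t) = 0` for all `ν`. -/
def inAffineConstraint {n r : ℕ} (a : Fin r → Fin n → (Fin n → ℝ) → ℝ → ℝ)
    (a0 : Fin r → (Fin n → ℝ) → ℝ → ℝ) (t : ℝ) (q ξ : Fin n → ℝ) : Prop :=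
  ∀ ν, (∑ i, a ν i q t * ξ i) + a0 ν q t = 0

/-- Membership in the space of virtual displacements `𝒟_t|_q`:
`Σ_i a_{νi}(q,t) η^i = 0` for all `ν`. -/
def inVirtual {n r : ℕ} (a : Fin r → Fin n → (Fin n → ℝ) → ℝ → ℝ)
    (t : ℝ) (q η : Fin n → ℝ) : Prop :=
  ∀ ν, (∑ i, a ν i q t * η i) = 0

/-- The variational derivative `δL(η)|_γ(t)` of `L` along `γ` in the direction of a fixed
vector `η`. -/
noncomputable def varDerivPt {n : ℕ} (L : (Fin n → ℝ) → (Fin n → ℝ) → ℝ → ℝ)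
    (γ : ℝ → (Fin n → ℝ)) (η : Fin n → ℝ) (t : ℝ) : ℝ :=
  fderiv ℝ (fun q => L q (deriv γ t) t) (γ t) η
    - deriv (fun s => fderiv ℝ (fun v => L (γ s) v s) (deriv γ s) η) t

/-- `γ` is a motion of the nonholonomic system `(ℝⁿ, L, F, 𝒜)`: it is admissible,
`γ̇(t) ∈ 𝒜_t|_{γ(t)}`, and `δL(η)|_γ + F(η)|_γ = 0` for all virtual displacements
`η ∈ 𝒟_t|_{γ(t)}`. -/
def IsNonholonomicMotion {n r : ℕ} (L : (Fin n → ℝ) → (Fin n → ℝ) → ℝ → ℝ)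
    (F : (Fin n → ℝ) → (Fin n → ℝ) → ℝ → ((Fin n → ℝ) →L[ℝ] ℝ))
    (a : Fin r → Fin n → (Fin n → ℝ) → ℝ → ℝ)
    (a0 : Fin r → (Fin n → ℝ) → ℝ → ℝ) (γ : ℝ → (Fin n → ℝ)) : Prop :=
  (∀ t, inAffineConstraint a a0 t (γ t) (deriv γ t)) ∧
  (∀ t, ∀ η : Fin n → ℝ, inVirtual a t (γ t) η →
    varDerivPt L γ η t + F (γ t) (deriv γ t) t η = 0)

/-!
The variational derivative is the first variation minus a total time derivative,
`δL(η)|_γ = ∂L/∂q (η) + ∂L/∂q̇ (η̇) - (d/dt) (∂L/∂q̇ (η))`. The frame acts on states `(x, v, t)` by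
its prolongation `J`, and the moving Lagrangian is `l = L ∘ J`. By the chain rule both terms for `l`
along `Γ` and a constant `ξ` are those for `L` along `γ = g_t(Γ)` and `η = Dg_t(ξ)`: this needs
`∂γ̇/∂ẋ = ∂γ/∂x` and `∂γ̇/∂x = (d/dt) (∂γ/∂x)`, the latter being the symmetry of the second
derivative of `g`. Hence `δl(ξ)|_Γ = δL(Dg_t(ξ))|_γ`, and since `Dg_t` is onto, `Dg_t(ξ)` runs
through all virtual displacements. Velocities correspond because `γ̇ = Dg_t(Γ̇) + ∂g_t/∂t`, where
`∂g_t/∂t = ω_t ∘ g_t = Dg_t(Ω_t)`.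
-/

open Function

section FDeriv

variable {𝕜 E F G : Type*} [NontriviallyNormedField 𝕜] [NormedAddCommGroup E] [NormedSpace 𝕜 E]
  [NormedAddCommGroup F] [NormedSpace 𝕜 F] [NormedAddCommGroup G] [NormedSpace 𝕜 G]

lemma differentiable_fderiv_of_contDiff_two {f : E → F} (hf : ContDiff 𝕜 2 f) :
    Differentiable 𝕜 (fderiv 𝕜 f) :=
  (hf.fderiv_right (m := 1) le_rfl).differentiable one_ne_zero

lemma hasFDerivAt_apply_of_uncurry {f : G → E → F} {s : G} {x : E}
    (hf : DifferentiableAt 𝕜 (uncurry f) (s, x)) :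
    HasFDerivAt (f s) (fderiv 𝕜 (uncurry f) (s, x) ∘L .inr 𝕜 G E) x :=
  hf.hasFDerivAt.comp x (hasFDerivAt_prodMk_right s x)

lemma fderiv_apply_eq_fderiv_uncurry {f : G → E → F} {s : G} {x : E}
    (hf : DifferentiableAt 𝕜 (uncurry f) (s, x)) (v : E) :
    fderiv 𝕜 (f s) x v = fderiv 𝕜 (uncurry f) (s, x) (0, v) := by
  simp [(hasFDerivAt_apply_of_uncurry hf).fderiv]

lemma fderiv_apply_fderiv_of_rightInverse {f : E → F} {f' : F → E} {y : F}
    (hf : DifferentiableAt 𝕜 f (f' y)) (hf' : DifferentiableAt 𝕜 f' y)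
    (hright : RightInverse f' f) (w : F) : fderiv 𝕜 f (f' y) (fderiv 𝕜 f' y w) = w := by
  rw [← ContinuousLinearMap.comp_apply, ← fderiv_comp y hf hf', hright.comp_eq_id, fderiv_id,
    ContinuousLinearMap.id_apply]

end FDeriv

section AbsoluteVelocity

variable {X Q : Type*} [NormedAddCommGroup X] [NormedSpace ℝ X] [NormedAddCommGroup Q]
  [NormedSpace ℝ Q]

/-- The velocity, in the fixed frame, of a point that sits at `x` and moves with velocity `v`
relative to the frame `g`: the relative velocity `Dg_t(v)` plus the transport velocity
`∂g_t(x)/∂t`. It is encoded by the total derivative of `(t, x) ↦ g_t(x)`, so that its own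
derivatives are second derivatives of a single map. -/
noncomputable def absoluteVelocity (g : ℝ → X → Q) (t : ℝ) (x v : X) : Q :=
  fderiv ℝ (uncurry g) (t, x) (1, v)

/-- The action `(x, v, t) ↦ (g_t(x), Dg_t(v) + ∂g_t(x)/∂t, t)` of a moving frame `g` on states,
that is, on triples of a position, a velocity and a time. -/
noncomputable def frameProlongation (g : ℝ → X → Q) (p : X × X × ℝ) : Q × Q × ℝ :=
  (g p.2.2 p.1, absoluteVelocity g p.2.2 p.1 p.2.1, p.2.2)

/-- The curve of states `(γ(t), γ̇(t), t)` traced out by a curve `γ` of positions. -/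
noncomputable def stateCurve (γ : ℝ → X) (t : ℝ) : X × X × ℝ :=
  (γ t, deriv γ t, t)

/-- The Lagrangian `l(x, v, t) = L(g_t(x), Dg_t(v) + ∂g_t(x)/∂t, t)` of the system with
Lagrangian `L` observed in the moving frame `g`. -/
noncomputable def pullbackLagrangian (g : ℝ → X → Q) (L : Q → Q → ℝ → ℝ) (x v : X) (t : ℝ) : ℝ :=
  L (g t x) (absoluteVelocity g t x v) t

/-- The force field `f(x, v, t) = F(g_t(x), Dg_t(v) + ∂g_t(x)/∂t, t) ∘ Dg_t` of the system with
force field `F` observed in the moving frame `g`. -/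
noncomputable def pullbackForce (g : ℝ → X → Q) (F : Q → Q → ℝ → Q →L[ℝ] ℝ) (x v : X) (t : ℝ) :
    X →L[ℝ] ℝ :=
  (F (g t x) (absoluteVelocity g t x v) t).comp (fderiv ℝ (g t) x)

variable {g : ℝ → X → Q} {Γ : ℝ → X} {t : ℝ} {x v : X}

lemma fderiv_add_absoluteVelocity_zero (hg : DifferentiableAt ℝ (uncurry g) (t, x)) (v : X) :
    fderiv ℝ (g t) x v + absoluteVelocity g t x 0 = absoluteVelocity g t x v := by
  simp [absoluteVelocity, fderiv_apply_eq_fderiv_uncurry hg, ← map_add]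

lemma hasDerivAt_frame_comp (hg : DifferentiableAt ℝ (uncurry g) (t, Γ t))
    (hΓ : HasDerivAt Γ v t) :
    HasDerivAt (fun s => g s (Γ s)) (absoluteVelocity g t (Γ t) v) t :=
  hg.hasFDerivAt.comp_hasDerivAt (f := fun s => (s, Γ s)) t ((hasDerivAt_id t).prodMk hΓ)

lemma hasDerivAt_frame_shift (hg : DifferentiableAt ℝ (uncurry g) (t, x)) :
    HasDerivAt (fun s => g (t + s) x) (absoluteVelocity g t x 0) 0 := by
  have h := hasDerivAt_frame_comp (Γ := fun _ => x) hg (hasDerivAt_const t x)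
  exact HasDerivAt.comp_const_add t 0 (by simpa using h)

lemma frameProlongation_stateCurve (hg : Differentiable ℝ (uncurry g)) (hΓ : Differentiable ℝ Γ)
    (t : ℝ) : frameProlongation g (stateCurve Γ t) = stateCurve (fun s => g s (Γ s)) t := by
  simp [frameProlongation, stateCurve,
    (hasDerivAt_frame_comp (hg (t, Γ t)) (hΓ t).hasDerivAt).deriv]

lemma differentiable_stateCurve {γ : ℝ → X} (hγ : ContDiff ℝ 2 γ) :
    Differentiable ℝ (stateCurve γ) :=
  (hγ.differentiable two_ne_zero).prodMk (hγ.differentiable_deriv_two.prodMk differentiable_id)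

lemma differentiable_frameProlongation (hg : ContDiff ℝ 2 (uncurry g)) :
    Differentiable ℝ (frameProlongation g) := by
  have hswap : Differentiable ℝ fun p : X × X × ℝ => (p.2.2, p.1) := by fun_prop
  have hpos : Differentiable ℝ fun p : X × X × ℝ => g p.2.2 p.1 :=
    (hg.differentiable two_ne_zero).comp hswap
  have hDg : Differentiable ℝ fun p : X × X × ℝ => fderiv ℝ (uncurry g) (p.2.2, p.1) :=
    (differentiable_fderiv_of_contDiff_two hg).comp hswap
  have hvel : Differentiable ℝ fun p : X × X × ℝ => absoluteVelocity g p.2.2 p.1 p.2.1 :=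
    hDg.clm_apply (by fun_prop : Differentiable ℝ fun p : X × X × ℝ => ((1 : ℝ), p.2.1))
  exact hpos.prodMk (hvel.prodMk (by fun_prop))

lemma fderiv_frameProlongation (hg : ContDiff ℝ 2 (uncurry g)) (x v ξ ζ : X) (t : ℝ) :
    fderiv ℝ (frameProlongation g) (x, v, t) (ξ, ζ, 0) =
      (fderiv ℝ (g t) x ξ,
        fderiv ℝ (fderiv ℝ (uncurry g)) (t, x) (0, ξ) (1, v) + fderiv ℝ (g t) x ζ, 0) := by
  have hg' : Differentiable ℝ (uncurry g) := hg.differentiable two_ne_zero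
  have hfst := hasFDerivAt_fst (𝕜 := ℝ) (p := (x, v, t))
  have hsnd := hasFDerivAt_snd (𝕜 := ℝ) (p := (x, v, t))
  have hpos := (hg' (t, x)).hasFDerivAt.comp (x, v, t) (hsnd.snd.prodMk hfst)
  have hvel := ((differentiable_fderiv_of_contDiff_two hg (t, x)).hasFDerivAt.comp (x, v, t)
    (hsnd.snd.prodMk hfst)).clm_apply ((hasFDerivAt_const (1 : ℝ) _).prodMk hsnd.fst)
  have h : HasFDerivAt (frameProlongation g) _ (x, v, t) := hpos.prodMk (hvel.prodMk hsnd.snd)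
  simp [h.fderiv, fderiv_apply_eq_fderiv_uncurry (hg' (t, x)), add_comm]

lemma fderiv_frameProlongation_velocity (hg : ContDiff ℝ 2 (uncurry g)) (x v ζ : X) (t : ℝ) :
    fderiv ℝ (frameProlongation g) (x, v, t) (0, ζ, 0) = (0, fderiv ℝ (g t) x ζ, 0) := by
  simpa [Prod.mk_zero_zero] using fderiv_frameProlongation hg x v 0 ζ t

-- Lagrange's identity `∂γ̇/∂x = (d/dt) (∂γ/∂x)`.
lemma hasDerivAt_fderiv_frame_along (hg : ContDiff ℝ 2 (uncurry g)) (hΓ : HasDerivAt Γ v t)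
    (ξ : X) :
    HasDerivAt (fun s => fderiv ℝ (g s) (Γ s) ξ)
      (fderiv ℝ (fderiv ℝ (uncurry g)) (t, Γ t) (0, ξ) (1, v)) t := by
  have hsymm : IsSymmSndFDerivAt ℝ (uncurry g) (t, Γ t) :=
    hg.contDiffAt.isSymmSndFDerivAt (by simp)
  have hDg : HasDerivAt (fun s => fderiv ℝ (uncurry g) (s, Γ s))
      (fderiv ℝ (fderiv ℝ (uncurry g)) (t, Γ t) (1, v)) t :=
    (differentiable_fderiv_of_contDiff_two hg (t, Γ t)).hasFDerivAt.comp_hasDerivAt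
      (f := fun s => (s, Γ s)) t ((hasDerivAt_id t).prodMk hΓ)
  rw [hsymm.eq]
  simpa [fderiv_apply_eq_fderiv_uncurry (hg.differentiable two_ne_zero _)] using
    hDg.clm_apply (hasDerivAt_const t ((0 : ℝ), ξ))

end AbsoluteVelocity

section VariationalDerivative

variable {m n : ℕ} {L : (Fin n → ℝ) → (Fin n → ℝ) → ℝ → ℝ} {γ : ℝ → Fin n → ℝ} {t : ℝ}

lemma varDerivPt_eq_fderiv_stateCurve (hL : Differentiable ℝ ↿L) (γ : ℝ → Fin n → ℝ)
    (η : Fin n → ℝ) (t : ℝ) :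
    varDerivPt L γ η t = fderiv ℝ ↿L (stateCurve γ t) (η, 0, 0)
      - deriv (fun s => fderiv ℝ ↿L (stateCurve γ s) (0, η, 0)) t := by
  have hpos : HasFDerivAt (fun q => L q (deriv γ t) t) _ (γ t) :=
    (hL (stateCurve γ t)).hasFDerivAt.comp (f := fun q => (q, deriv γ t, t)) (γ t)
      (hasFDerivAt_prodMk_left (𝕜 := ℝ) (γ t) (deriv γ t, t))
  have hvel (s : ℝ) : HasFDerivAt (fun v => L (γ s) v s) _ (deriv γ s) :=
    (hL (stateCurve γ s)).hasFDerivAt.comp (f := fun v => (γ s, v, s)) (deriv γ s)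
      (((hasFDerivAt_const (𝕜 := ℝ) (γ s) (deriv γ s)).prodMk
        (hasFDerivAt_prodMk_left (𝕜 := ℝ) (deriv γ s) s)))
  simp [varDerivPt, Prod.mk_zero_zero, hpos.fderiv, fun s => (hvel s).fderiv]

-- Letting `η` vary with time adds `∂L/∂q̇ (η̇)` to both terms.
lemma varDerivPt_eq_of_hasDerivAt (hL : ContDiff ℝ 2 ↿L) (hγ : ContDiff ℝ 2 γ)
    {η : ℝ → Fin n → ℝ} {η' : Fin n → ℝ} (hη : HasDerivAt η η' t) :
    varDerivPt L γ (η t) t = fderiv ℝ ↿L (stateCurve γ t) (η t, η', 0)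
      - deriv (fun s => fderiv ℝ ↿L (stateCurve γ s) (0, η s, 0)) t := by
  have hp : HasDerivAt (fun s => fderiv ℝ ↿L (stateCurve γ s)) _ t :=
    ((differentiable_fderiv_of_contDiff_two hL).comp (differentiable_stateCurve hγ) t).hasDerivAt
  have hconst := hp.clm_apply (hasDerivAt_const t ((0 : Fin n → ℝ), η t, (0 : ℝ)))
  have hvar := hp.clm_apply
    ((hasDerivAt_const t (0 : Fin n → ℝ)).prodMk (hη.prodMk (hasDerivAt_const t (0 : ℝ))))
  have hsplit : ((η t, η', 0) : (Fin n → ℝ) × (Fin n → ℝ) × ℝ) = (η t, 0, 0) + (0, η', 0) := by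
    simp
  rw [varDerivPt_eq_fderiv_stateCurve (hL.differentiable two_ne_zero), hconst.deriv, hvar.deriv,
    hsplit, map_add]
  simp

lemma varDerivPt_pullbackLagrangian {g : ℝ → (Fin m → ℝ) → Fin n → ℝ}
    (hg : ContDiff ℝ 2 (uncurry g)) (hL : ContDiff ℝ 2 ↿L) {Γ : ℝ → Fin m → ℝ}
    (hΓ : Differentiable ℝ Γ) (hγ : ContDiff ℝ 2 fun t => g t (Γ t)) (ξ : Fin m → ℝ) (t : ℝ) :
    varDerivPt (pullbackLagrangian g L) Γ ξ t
      = varDerivPt L (fun s => g s (Γ s)) (fderiv ℝ (g t) (Γ t) ξ) t := by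
  have hJ : Differentiable ℝ (frameProlongation g) := differentiable_frameProlongation hg
  have hL' : Differentiable ℝ ↿L := hL.differentiable two_ne_zero
  have hl : ↿(pullbackLagrangian g L) = ↿L ∘ frameProlongation g := rfl
  have hchain (s : ℝ) (w : (Fin m → ℝ) × (Fin m → ℝ) × ℝ) :
      fderiv ℝ ↿(pullbackLagrangian g L) (stateCurve Γ s) w
        = fderiv ℝ ↿L (stateCurve (fun s => g s (Γ s)) s)
            (fderiv ℝ (frameProlongation g) (stateCurve Γ s) w) := by
    rw [hl, fderiv_comp _ (hL' _) (hJ _), ContinuousLinearMap.comp_apply,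
      frameProlongation_stateCurve (hg.differentiable two_ne_zero) hΓ]
  rw [varDerivPt_eq_fderiv_stateCurve (hl ▸ hL'.comp hJ),
    varDerivPt_eq_of_hasDerivAt hL hγ (hasDerivAt_fderiv_frame_along hg (hΓ t).hasDerivAt ξ)]
  simp_rw [hchain]
  simp [stateCurve, fderiv_frameProlongation_velocity hg, fderiv_frameProlongation hg (ζ := 0)]

end VariationalDerivative

section Constraints

lemma sum_sum_mul_map_single_mul {R ι κ A : Type*} [CommSemiring R] [Fintype ι] [DecidableEq ι]
    [Fintype κ] [FunLike A (ι → R) (κ → R)] [LinearMapClass A R (ι → R) (κ → R)]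
    (f : A) (b : κ → R) (ξ : ι → R) :
    ∑ i, (∑ k, b k * f (Pi.single i 1) k) * ξ i = ∑ k, b k * f ξ k := by
  have h := Matrix.dotProduct_mulVec b (LinearMap.toMatrix' (f : (ι → R) →ₗ[R] κ → R)) ξ
  rw [LinearMap.toMatrix'_mulVec] at h
  exact h.symm

variable {m n r : ℕ}

/-- The coefficients `Σ_k a_{νk}(g_t(x), t) (Dg_t)^k_i` of the constraints on virtual displacements
in the moving frame `g`, so that they define `𝐃_t = (Dg_t)⁻¹(𝒟_t)`. -/
noncomputable def pullbackCoeff (g : ℝ → (Fin m → ℝ) → Fin n → ℝ)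
    (a : Fin r → Fin n → (Fin n → ℝ) → ℝ → ℝ) (ν : Fin r) (i : Fin m) (x : Fin m → ℝ) (t : ℝ) : ℝ :=
  ∑ k, a ν k (g t x) t * fderiv ℝ (g t) x (Pi.single i 1) k

/-- The inhomogeneous terms of the constraints in the moving frame `g`: they absorb the value of the
constraint forms on the transport velocity `∂g_t(x)/∂t = Dg_t(Ω_t(x))`. -/
noncomputable def pullbackOffset (g : ℝ → (Fin m → ℝ) → Fin n → ℝ)
    (a : Fin r → Fin n → (Fin n → ℝ) → ℝ → ℝ) (a0 : Fin r → (Fin n → ℝ) → ℝ → ℝ)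
    (ν : Fin r) (x : Fin m → ℝ) (t : ℝ) : ℝ :=
  (∑ k, a ν k (g t x) t * absoluteVelocity g t x 0 k) + a0 ν (g t x) t

variable {g : ℝ → (Fin m → ℝ) → Fin n → ℝ} {a : Fin r → Fin n → (Fin n → ℝ) → ℝ → ℝ}
  {a0 : Fin r → (Fin n → ℝ) → ℝ → ℝ} {t : ℝ} {x v ξ : Fin m → ℝ}

lemma inVirtual_pullbackCoeff_iff :
    inVirtual (pullbackCoeff g a) t x ξ ↔ inVirtual a t (g t x) (fderiv ℝ (g t) x ξ) := by
  simp only [inVirtual, pullbackCoeff, sum_sum_mul_map_single_mul]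

lemma inAffineConstraint_pullback_iff (hg : DifferentiableAt ℝ (uncurry g) (t, x)) :
    inAffineConstraint (pullbackCoeff g a) (pullbackOffset g a a0) t x v ↔
      inAffineConstraint a a0 t (g t x) (absoluteVelocity g t x v) := by
  simp only [inAffineConstraint, pullbackCoeff, pullbackOffset, sum_sum_mul_map_single_mul,
    ← fderiv_add_absoluteVelocity_zero hg v, Pi.add_apply, mul_add, Finset.sum_add_distrib,
    add_assoc]

end Constraints

lemma isNonholonomicMotion_frame_comp_iff {m n r : ℕ} {g : ℝ → (Fin m → ℝ) → Fin n → ℝ}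
    (hg : ContDiff ℝ 2 (uncurry g)) {L : (Fin n → ℝ) → (Fin n → ℝ) → ℝ → ℝ}
    (hL : ContDiff ℝ 2 ↿L) (F : (Fin n → ℝ) → (Fin n → ℝ) → ℝ → (Fin n → ℝ) →L[ℝ] ℝ)
    (a : Fin r → Fin n → (Fin n → ℝ) → ℝ → ℝ) (a0 : Fin r → (Fin n → ℝ) → ℝ → ℝ)
    {Γ : ℝ → Fin m → ℝ} (hΓ : Differentiable ℝ Γ) (hγ : ContDiff ℝ 2 fun t => g t (Γ t))
    (hsurj : ∀ t, Surjective (fderiv ℝ (g t) (Γ t))) :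
    IsNonholonomicMotion L F a a0 (fun t => g t (Γ t)) ↔
      IsNonholonomicMotion (pullbackLagrangian g L) (pullbackForce g F) (pullbackCoeff g a)
        (pullbackOffset g a a0) Γ := by
  have hg' : Differentiable ℝ (uncurry g) := hg.differentiable two_ne_zero
  have hvel (t : ℝ) : deriv (fun t => g t (Γ t)) t = absoluteVelocity g t (Γ t) (deriv Γ t) :=
    (hasDerivAt_frame_comp (hg' _) (hΓ t).hasDerivAt).deriv
  refine and_congr (forall_congr' fun t => ?_) (forall_congr' fun t => ?_)
  · rw [inAffineConstraint_pullback_iff (hg' _), hvel]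
  · simp only [(hsurj t).forall, inVirtual_pullbackCoeff_iff,
      varDerivPt_pullbackLagrangian hg hL hΓ hγ, pullbackForce, hvel,
      ContinuousLinearMap.comp_apply]

section MovingFrame

variable {n : ℕ} {g ginv : ℝ → (Fin n → ℝ) → Fin n → ℝ}

lemma omegaFixed_apply_frame (hg : Differentiable ℝ (uncurry g))
    (hleft : ∀ t x, ginv t (g t x) = x) (t : ℝ) (x : Fin n → ℝ) :
    omegaFixed g ginv t (g t x) = absoluteVelocity g t x 0 := by
  rw [omegaFixed, hleft]
  exact (hasDerivAt_frame_shift (hg (t, x))).deriv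

lemma fderiv_omegaMoving (hg : Differentiable ℝ (uncurry g))
    (hginv : ∀ t, Differentiable ℝ (ginv t)) (hleft : ∀ t x, ginv t (g t x) = x)
    (hright : ∀ t q, g t (ginv t q) = q) (t : ℝ) (x : Fin n → ℝ) :
    fderiv ℝ (g t) x (omegaMoving g ginv t x) = absoluteVelocity g t x 0 := by
  have hΩ : omegaMoving g ginv t x = fderiv ℝ (ginv t) (g t x) (absoluteVelocity g t x 0) := by
    have hginv' : HasFDerivAt (ginv t) (fderiv ℝ (ginv t) (g t x)) (g (t + 0) x) := by
      simpa using (hginv t _).hasFDerivAt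
    exact (hginv'.comp_hasDerivAt 0 (hasDerivAt_frame_shift (hg (t, x)))).deriv
  have hgt : DifferentiableAt ℝ (g t) (ginv t (g t x)) :=
    (hasFDerivAt_apply_of_uncurry (hg _)).differentiableAt
  simpa only [hleft, hΩ] using
    fderiv_apply_fderiv_of_rightInverse hgt (hginv t _) (hright t) (absoluteVelocity g t x 0)

end MovingFrame

theorem nonholonomic_motion_fixed_iff_moving_general {n r : ℕ}
    (g ginv : ℝ → (Fin n → ℝ) → (Fin n → ℝ))
    (hg : ContDiff ℝ 2 (fun p : ℝ × (Fin n → ℝ) => g p.1 p.2))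
    (hginv : Differentiable ℝ (fun p : ℝ × (Fin n → ℝ) => ginv p.1 p.2))
    (hleft : ∀ t x, ginv t (g t x) = x)
    (hright : ∀ t q, g t (ginv t q) = q)
    (L : (Fin n → ℝ) → (Fin n → ℝ) → ℝ → ℝ)
    (hL : ContDiff ℝ 2 (fun p : (Fin n → ℝ) × (Fin n → ℝ) × ℝ => L p.1 p.2.1 p.2.2))
    (F : (Fin n → ℝ) → (Fin n → ℝ) → ℝ → ((Fin n → ℝ) →L[ℝ] ℝ))
    (a : Fin r → Fin n → (Fin n → ℝ) → ℝ → ℝ)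
    (a0 : Fin r → (Fin n → ℝ) → ℝ → ℝ)
    (γ : ℝ → (Fin n → ℝ)) (hγ : ContDiff ℝ 2 γ) :
    IsNonholonomicMotion L F a a0 γ ↔
      IsNonholonomicMotion
        (fun x v t => L (g t x) (fderiv ℝ (g t) x v + omegaFixed g ginv t (g t x)) t)
        (fun x v t =>
          (F (g t x) (fderiv ℝ (g t) x v + omegaFixed g ginv t (g t x)) t).comp
            (fderiv ℝ (g t) x))
        (fun ν i x t => ∑ k, a ν k (g t x) t * fderiv ℝ (g t) x (Pi.single i 1) k)
        (fun ν x t =>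
          (∑ k, a ν k (g t x) t * fderiv ℝ (g t) x (omegaMoving g ginv t x) k)
            + a0 ν (g t x) t)
        (fun t => ginv t (γ t)) := by
  have hg' : Differentiable ℝ (uncurry g) := hg.differentiable two_ne_zero
  have hgt (t : ℝ) : Differentiable ℝ (g t) := fun x =>
    (hasFDerivAt_apply_of_uncurry (hg' (t, x))).differentiableAt
  have hginvt (t : ℝ) : Differentiable ℝ (ginv t) := fun q =>
    (hasFDerivAt_apply_of_uncurry (hginv (t, q))).differentiableAt
  have hΓ : Differentiable ℝ fun t => ginv t (γ t) :=
    hginv.comp (differentiable_id.prodMk (hγ.differentiable two_ne_zero))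
  have hsurj (t : ℝ) : Surjective (fderiv ℝ (g t) (ginv t (γ t))) := fun η =>
    ⟨_, fderiv_apply_fderiv_of_rightInverse (hgt t _) (hginvt t _) (hright t) η⟩
  simp only [omegaFixed_apply_frame hg' hleft, fderiv_omegaMoving hg' hginvt hleft hright,
    fderiv_add_absoluteVelocity_zero (hg' _)]
  have hγ' : ContDiff ℝ 2 fun t => g t (ginv t (γ t)) := by simpa only [hright] using hγ
  have h := isNonholonomicMotion_frame_comp_iff hg hL F a a0 hΓ hγ' hsurj
  simp only [hright] at h
  exact h

/-- Equivalence of nonholonomic dynamics in the fixed and moving frames: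
`γ` is a motion of `(ℝⁿ, L, F, 𝒜)` iff `Γ(t) = g_t⁻¹(γ(t))` is a motion of the system
`(ℝⁿ, l, f, 𝐀)` in the moving frame, where
`l(x,ẋ,t) = L(g_t(x), Dg_t(ẋ) + ω_t(g_t(x)), t)`,
`f(x,ẋ,t)(ξ) = F(g_t(x), Dg_t(ẋ) + ω_t(g_t(x)), t)(Dg_t(ξ))`,
`𝐃_t|_x = (Dg_t)⁻¹(𝒟_t|_{g_t(x)})` and `𝐀_t|_x = (Dg_t)⁻¹(𝒜_t|_{g_t(x)}) − Ω_t(x)`. -/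
theorem nonholonomic_motion_fixed_iff_moving {n r : ℕ}
    (g ginv : ℝ → (Fin n → ℝ) → (Fin n → ℝ))
    (hg : ContDiff ℝ ∞ (fun p : ℝ × (Fin n → ℝ) => g p.1 p.2))
    (hginv : ContDiff ℝ ∞ (fun p : ℝ × (Fin n → ℝ) => ginv p.1 p.2))
    (hleft : ∀ t x, ginv t (g t x) = x)
    (hright : ∀ t q, g t (ginv t q) = q)
    (L : (Fin n → ℝ) → (Fin n → ℝ) → ℝ → ℝ)
    (hL : ContDiff ℝ ∞ (fun p : (Fin n → ℝ) × (Fin n → ℝ) × ℝ => L p.1 p.2.1 p.2.2))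
    (F : (Fin n → ℝ) → (Fin n → ℝ) → ℝ → ((Fin n → ℝ) →L[ℝ] ℝ))
    (hF : ContDiff ℝ ∞ (fun p : (Fin n → ℝ) × (Fin n → ℝ) × ℝ => F p.1 p.2.1 p.2.2))
    (a : Fin r → Fin n → (Fin n → ℝ) → ℝ → ℝ)
    (a0 : Fin r → (Fin n → ℝ) → ℝ → ℝ)
    (ha : ∀ ν i, ContDiff ℝ ∞ (fun p : (Fin n → ℝ) × ℝ => a ν i p.1 p.2))
    (ha0 : ∀ ν, ContDiff ℝ ∞ (fun p : (Fin n → ℝ) × ℝ => a0 ν p.1 p.2))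
    (hrank : ∀ q t, LinearIndependent ℝ (fun ν : Fin r => (fun i => a ν i q t : Fin n → ℝ)))
    (γ : ℝ → (Fin n → ℝ)) (hγ : ContDiff ℝ ∞ γ) :
    IsNonholonomicMotion L F a a0 γ ↔
      IsNonholonomicMotion
        -- the Lagrangian `l` in the moving frame
        (fun x v t => L (g t x) (fderiv ℝ (g t) x v + omegaFixed g ginv t (g t x)) t)
        -- the force field `f` in the moving frame
        (fun x v t =>
          (F (g t x) (fderiv ℝ (g t) x v + omegaFixed g ginv t (g t x)) t).comp
            (fderiv ℝ (g t) x))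
        -- the constraints defining `𝐃_t` in the moving frame: `Dg_t(ξ) ∈ 𝒟_t|_{g_t x}`,
        -- expressed through coefficients pulled back by `Dg_t`
        (fun ν i x t => ∑ k, a ν k (g t x) t * fderiv ℝ (g t) x (Pi.single i 1) k)
        -- the affine part of `𝐀_t` in the moving frame:
        -- `ξ ∈ 𝐀_t|_x ↔ Dg_t(ξ + Ω_t(x)) ∈ 𝒜_t|_{g_t x}`
        (fun ν x t =>
          (∑ k, a ν k (g t x) t * fderiv ℝ (g t) x (omegaMoving g ginv t x) k)
            + a0 ν (g t x) t)
        (fun t => ginv t (γ t)) := by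
  exact nonholonomic_motion_fixed_iff_moving_general g ginv (contDiff_infty.1 hg 2)
    (hginv.differentiable (by simp)) hleft hright L (contDiff_infty.1 hL 2) F a a0 γ
    (contDiff_infty.1 hγ 2)
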